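/- If n ≥ 1, k ≥ 0 and n + k is even, then Pₙ(k) = P_{n−1}(k+1) − P(S_{n−1} = k+1). -/

import Mathlib

/-!
Condition on the first sign. Write `n = m + 1`; the remaining sum `s = S m ε` has the parity of
`m`, hence of `k + 1`. For such `s`, `|s + 1| ≤ k` means `|s| ≤ k + 1` with `s ≠ k + 1`, and
`|s - 1| ≤ k` means `|s| ≤ k + 1` with `s ≠ -(k + 1)`. So `P n k` is the average of
`P m (k + 1) - P(S = k + 1)` and `P m (k + 1) - P(S = -(k + 1))`, which agree by symmetry.
The conditioning step is `pr_succ`, the parity is `even_S_add`, the symmetry is `prEq_neg`.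
-/

/-- Probability of an event under the uniform distribution on sign vectors
`{-1,1}^n` (encoded as `Fin n → Bool`), which is the joint law of `n`
independent Rademacher random variables. -/
noncomputable def pr (n : ℕ) (E : (Fin n → Bool) → Prop) : ℝ :=
  letI := Classical.decPred E
  ((Finset.univ.filter E).card : ℝ) / 2 ^ n

/-- `S n ε = ε₁ + ⋯ + εₙ`, the sum of `n` Rademacher variables. -/
def S (n : ℕ) (ε : Fin n → Bool) : ℤ := ∑ i, if ε i then 1 else -1

/-- `P n k = P(|Sₙ| ≤ k)` (with an integer threshold, so `P n (-1) = 0`). -/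
noncomputable def P (n : ℕ) (k : ℤ) : ℝ := pr n fun ε => |S n ε| ≤ k

/-- `prEq n j = P(Sₙ = j)`. -/
noncomputable def prEq (n : ℕ) (j : ℤ) : ℝ := pr n fun ε => S n ε = j

/-- `Pxi ξ n = P(|Sₙ| ≤ ξ·√n)`. -/
noncomputable def Pxi (ξ : ℝ) (n : ℕ) : ℝ :=
  pr n fun ε => (|S n ε| : ℝ) ≤ ξ * Real.sqrt n

/-- `nseq ξ k = nₖ = 2·⌈(k²/ξ² + k)/2⌉ − k − 1`. -/
noncomputable def nseq (ξ : ℝ) (k : ℕ) : ℤ :=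
  2 * ⌈((k : ℝ) ^ 2 / ξ ^ 2 + (k : ℝ)) / 2⌉ - k - 1

theorem pr_congr {n : ℕ} {E F : (Fin n → Bool) → Prop} (h : ∀ ε, E ε ↔ F ε) :
    pr n E = pr n F := by
  rw [show E = F from funext fun ε => propext (h ε)]

/-- Law of total probability, conditioning on the first sign. -/
theorem pr_succ (m : ℕ) (E : (Fin (m + 1) → Bool) → Prop) :
    pr (m + 1) E = (pr m (fun ε => E (Fin.cons true ε)) +
      pr m (fun ε => E (Fin.cons false ε))) / 2 := by
  classical
  have key : ((Finset.univ.filter E).card : ℝ) =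
      (Finset.univ.filter fun ε : Fin m → Bool => E (Fin.cons true ε)).card +
      (Finset.univ.filter fun ε : Fin m → Bool => E (Fin.cons false ε)).card := by
    simp only [← Finset.sum_boole]
    rw [← (Fin.consEquiv fun _ : Fin (m + 1) => Bool).sum_comp, Fintype.sum_prod_type,
      Fintype.sum_bool]
    rfl
  unfold pr
  rw [← add_div, div_div, ← pow_succ]
  convert congrArg (fun x : ℝ => x / 2 ^ (m + 1)) key using 1

theorem pr_and_not {n : ℕ} {E F : (Fin n → Bool) → Prop} (h : ∀ ε, E ε → F ε) :
    pr n (fun ε => F ε ∧ ¬ E ε) = pr n F - pr n E := by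
  classical
  have key : (Finset.univ.filter fun ε => F ε ∧ ¬ E ε).card + (Finset.univ.filter E).card
      = (Finset.univ.filter F).card := by
    rw [← Finset.card_filter_add_card_filter_not (s := Finset.univ.filter F) E,
      Finset.filter_filter, Finset.filter_filter, add_comm]
    congr 3
    ext ε
    exact ⟨fun he => ⟨h ε he, he⟩, fun he => he.2⟩
  have key' : ((Finset.univ.filter fun ε => F ε ∧ ¬ E ε).card : ℝ)
      = (Finset.univ.filter F).card - (Finset.univ.filter E).card := by
    rw [← key]; push_cast; ring
  unfold pr
  rw [← sub_div]
  convert congrArg (fun x : ℝ => x / 2 ^ n) key' using 1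
  congr!

theorem S_cons (m : ℕ) (b : Bool) (ε : Fin m → Bool) :
    S (m + 1) (Fin.cons b ε) = (if b then 1 else -1) + S m ε := by
  simp [S, Fin.sum_univ_succ]

theorem even_S_add (n : ℕ) (ε : Fin n → Bool) : Even (S n ε + n) := by
  have : S n ε + n = ∑ i, ((if ε i then 1 else -1) + 1 : ℤ) := by
    simp [S, Finset.sum_add_distrib]
  rw [this]
  refine Finset.even_sum _ fun i _ => ?_
  cases ε i <;> decide

/-- The law of `S n` is symmetric: flipping all signs is a bijection of the sample space. -/
theorem prEq_neg (n : ℕ) (j : ℤ) : prEq n (-j) = prEq n j := by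
  classical
  have hS : ∀ ε : Fin n → Bool, S n (fun i => !ε i) = - S n ε := fun ε => by
    simp only [S, ← Finset.sum_neg_distrib]
    refine Finset.sum_congr rfl fun i _ => ?_
    by_cases hi : ε i = true <;> simp [hi]
  unfold prEq pr
  congr 2
  refine Finset.card_bij' (fun ε _ i => !ε i) (fun ε _ i => !ε i) ?_ ?_ ?_ ?_
  · intro ε he
    simp only [Finset.mem_filter, Finset.mem_univ, true_and] at he ⊢
    rw [hS, he, neg_neg]
  · intro ε he
    simp only [Finset.mem_filter, Finset.mem_univ, true_and] at he ⊢
    rw [hS, he]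
  · simp
  · simp

/-- if `n ≥ 1`, `k ≥ 0` and `n + k` is even, then
`Pₙ(k) = P_{n−1}(k+1) − P(S_{n−1} = k+1)`. -/
theorem stmt_8 (n k : ℕ) (hn : 1 ≤ n) (h : Even (n + k)) :
    P n (k : ℤ) = P (n - 1) ((k : ℤ) + 1) - prEq (n - 1) ((k : ℤ) + 1) := by
  obtain ⟨m, rfl⟩ : ∃ m, n = m + 1 := ⟨n - 1, by omega⟩
  rw [Nat.add_sub_cancel]
  have h1 : pr m (fun ε => |S (m + 1) (Fin.cons true ε)| ≤ (k : ℤ)) =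
      P m (k + 1) - prEq m (k + 1) := by
    unfold P prEq
    rw [← pr_and_not (fun ε he => by rw [he, abs_of_nonneg (by positivity)])]
    refine pr_congr fun ε => ?_
    obtain ⟨a, ha⟩ := even_S_add m ε
    obtain ⟨b, hb⟩ := h
    rw [S_cons, abs_le, abs_le, if_pos rfl]
    omega
  have h2 : pr m (fun ε => |S (m + 1) (Fin.cons false ε)| ≤ (k : ℤ)) =
      P m (k + 1) - prEq m (-(k + 1)) := by
    unfold P prEq
    rw [← pr_and_not (fun ε he => by rw [he, abs_neg, abs_of_nonneg (by positivity)])]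
    refine pr_congr fun ε => ?_
    obtain ⟨a, ha⟩ := even_S_add m ε
    obtain ⟨b, hb⟩ := h
    rw [S_cons, abs_le, abs_le, if_neg (by decide)]
    omega
  rw [prEq_neg] at h2
  rw [P, pr_succ, h1, h2]
  ring
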